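/- arXiv:1808.09182 — 2 statements merged into one kernel-verified Lean document; each statement's English description precedes it below -/
import Mathlib

section
/- For every x > 0, ∑_{n=0}^∞ (-1)^n (2n+1) e^{-n(n+1)x/2} = ∏_{n=1}^∞ (1 - e^{-nx})³. -/
/-!
Write `q = e^{-x}` and `(q)_k = ∏_{i=1}^k (1 - q^i)`. The identity is the limit `N → ∞` of

  `∑_{n ≥ 0} (-1)^n (2n+1) q^{n(n+1)/2} c(N, n) = (q)_N ^ 2`,
  `c(N, n) = (q)_{2N+1} / ((q)_{N-n} (q)_{N+1+n})`,

where `c(N, n)` is the Gaussian binomial coefficient `[2N+1; N-n]`, which vanishes for `n > N`.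

The finite identity (`sum_eq_sq`) goes by induction on `N`. Applying the two `q`-Pascal rules in
succession gives (`c_succ`)

  `c(N+1, n) = (1 + q^{2N+2}) c(N, n) + q^{N+2+n} c(N, n+1) + q^{N+1-n} c(N, n-1)`.

After multiplication by `(-1)^n q^{n(n+1)/2}`, the last two terms become `-q^{N+1}` times the
shifts by `± 1` of the sequence `u_n = (-1)^n q^{n(n+1)/2} c(N, n)`. The function `2n+1` is affine,
so up to a telescoping sum these shifts contribute `-2 q^{N+1} ∑ (2n+1) u_n`; the left-hand side
is thus multiplied by `1 + q^{2N+2} - 2 q^{N+1} = (1 - q^{N+1})^2` when `N` increases by one.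
The boundary term at `n = 0` vanishes by the symmetry `c(N, -1) = c(N, 0)`.

As `N → ∞`, `c(N, n) → 1 / (q)_∞` boundedly, because `(q)_k` tends to a nonzero limit, so
dominated convergence gives `∑ (-1)^n (2n+1) q^{n(n+1)/2} = (q)_∞ ^ 3`.
-/

open Filter Topology

namespace JacobiCube

/-- The `q`-Pochhammer symbol `(q; q)_k = ∏_{i=1}^k (1 - q^i)`. -/
noncomputable def Q (q : ℝ) (k : ℕ) : ℝ := ∏ i ∈ Finset.range k, (1 - q ^ (i + 1))

/-- The reciprocal `1 / (q; q)_k`, extended by `0` to negative integers `k`. -/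
noncomputable def R (q : ℝ) (k : ℤ) : ℝ := if 0 ≤ k then (Q q k.toNat)⁻¹ else 0

/-- The Gaussian binomial coefficient `[2N+1; N-n]`, for all integers `n`. -/
noncomputable def c (q : ℝ) (N : ℕ) (n : ℤ) : ℝ := Q q (2 * N + 1) * R q (N - n) * R q (N + 1 + n)

/-- The signed weight `(-1)^n e^{-n(n+1)x/2}`. -/
noncomputable def w (x : ℝ) (n : ℕ) : ℝ := (-1 : ℝ) ^ n * Real.exp (-(n * (n + 1) * x) / 2)

variable {q : ℝ}

lemma Q_succ (k : ℕ) : Q q (k + 1) = Q q k * (1 - q ^ (k + 1)) := by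
  simp [Q, Finset.prod_range_succ]

lemma one_sub_pow_pos (h0 : 0 < q) (h1 : q < 1) (k : ℕ) : 0 < 1 - q ^ (k + 1) :=
  sub_pos.2 (pow_lt_one₀ h0.le h1 (by simp))

lemma Q_pos (h0 : 0 < q) (h1 : q < 1) (k : ℕ) : 0 < Q q k :=
  Finset.prod_pos fun i _ => one_sub_pow_pos h0 h1 i

lemma Q_le_one (h0 : 0 < q) (h1 : q < 1) (k : ℕ) : Q q k ≤ 1 :=
  Finset.prod_le_one (fun i _ => (one_sub_pow_pos h0 h1 i).le)
    fun i _ => by have := pow_pos h0 (i + 1); linarith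

lemma R_natCast (k : ℕ) : R q k = (Q q k)⁻¹ := by simp [R]

lemma R_of_neg {k : ℤ} (hk : k < 0) : R q k = 0 := by simp [R, hk]

/-- With the convention `R q k = 0` for `k < 0`, this recurrence holds at every integer; at `k = 0`
both sides vanish. -/
lemma R_sub_one (h0 : 0 < q) (h1 : q < 1) (k : ℤ) : R q (k - 1) = (1 - q ^ k) * R q k := by
  rcases lt_or_ge k 0 with hk | hk
  · rw [R_of_neg hk, R_of_neg (by omega), mul_zero]
  lift k to ℕ using hk
  cases k with
  | zero => simp [R_of_neg]
  | succ k =>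
    have e : ((k + 1 : ℕ) : ℤ) - 1 = (k : ℤ) := by push_cast; ring
    have := (one_sub_pow_pos h0 h1 k).ne'
    rw [e, R_natCast, R_natCast, Q_succ, zpow_natCast]
    have := (Q_pos h0 h1 k).ne'
    field_simp

lemma c_of_lt {N : ℕ} {n : ℤ} (h : (N : ℤ) < n) : c q N n = 0 := by
  simp [c, R_of_neg (show (N : ℤ) - n < 0 by omega)]

lemma c_neg_one (N : ℕ) : c q N (-1) = c q N 0 := by
  simp only [c, sub_neg_eq_add, sub_zero, add_zero, add_neg_cancel_right]
  ring

/-- The composite of the two `q`-Pascal rules. -/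
lemma c_succ (h0 : 0 < q) (h1 : q < 1) (N : ℕ) (n : ℤ) :
    c q (N + 1) n = (1 + q ^ (2 * N + 2)) * c q N n + q ^ ((N : ℤ) + 2 + n) * c q N (n + 1)
      + q ^ ((N : ℤ) + 1 - n) * c q N (n - 1) := by
  have hq := h0.ne'
  -- Everything is expressed through the reciprocals at the largest arguments,
  -- `R q (N + 1 - n)` and `R q (N + 2 + n)`.
  have r1 := R_sub_one h0 h1 ((N : ℤ) + 1 - n)
  have r2 := R_sub_one h0 h1 ((N : ℤ) + 1 - n - 1)
  have s1 := R_sub_one h0 h1 ((N : ℤ) + 2 + n)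
  have s2 := R_sub_one h0 h1 ((N : ℤ) + 2 + n - 1)
  rw [r1, zpow_sub_one₀ hq] at r2
  rw [s1, zpow_sub_one₀ hq] at s2
  have hab : q ^ (2 * N + 3) = q ^ ((N : ℤ) + 1 - n) * q ^ ((N : ℤ) + 2 + n) := by
    rw [← zpow_add₀ hq, ← zpow_natCast]
    congr 1
    push_cast
    ring
  have hab' : q ^ (2 * N + 2) = q ^ ((N : ℤ) + 1 - n) * q ^ ((N : ℤ) + 2 + n) * q⁻¹ := by
    rw [← hab, pow_succ q (2 * N + 2)]
    field_simp
  simp only [c]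
  rw [show 2 * (N + 1) + 1 = 2 * N + 1 + 1 + 1 by ring, Q_succ, Q_succ,
    show 2 * N + 1 + 1 + 1 = 2 * N + 3 by ring, show 2 * N + 1 + 1 = 2 * N + 2 by ring, hab, hab',
    show ((N + 1 : ℕ) : ℤ) - n = (N : ℤ) + 1 - n by push_cast; ring,
    show ((N + 1 : ℕ) : ℤ) + 1 + n = (N : ℤ) + 2 + n by push_cast; ring,
    show (N : ℤ) - n = (N : ℤ) + 1 - n - 1 by ring,
    show (N : ℤ) + 1 + n = (N : ℤ) + 2 + n - 1 by ring,
    show (N : ℤ) - (n + 1) = (N : ℤ) + 1 - n - 1 - 1 by ring,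
    show (N : ℤ) + 1 + (n + 1) = (N : ℤ) + 2 + n by ring,
    show (N : ℤ) - (n - 1) = (N : ℤ) + 1 - n by ring,
    show (N : ℤ) + 1 + (n - 1) = (N : ℤ) + 2 + n - 1 - 1 by ring, r2, s2, r1, s1]
  ring

lemma w_succ (x : ℝ) (n : ℕ) : w x (n + 1) = -(w x n * Real.exp (-x) ^ (n + 1)) := by
  rw [w, w, ← Real.exp_nat_mul, pow_succ, mul_assoc ((-1 : ℝ) ^ n) _ (Real.exp (_ * _)),
    ← Real.exp_add]
  push_cast
  rw [show -(((n : ℝ) + 1) * (n + 1 + 1) * x) / 2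
    = -(n * (n + 1) * x) / 2 + ((n : ℝ) + 1) * -x by ring]
  ring

/-- One step of the induction on `N`, with its telescoping remainder. -/
lemma sum_succ {x : ℝ} (hx : 0 < x) (N K : ℕ) :
    ∑ n ∈ Finset.range K, w x n * (2 * n + 1) * c (Real.exp (-x)) (N + 1) n =
      (1 - Real.exp (-x) ^ (N + 1)) ^ 2 *
        (∑ n ∈ Finset.range K, w x n * (2 * n + 1) * c (Real.exp (-x)) N n)
      - Real.exp (-x) ^ (N + 1) * (w x K * ((2 * K - 1) * c (Real.exp (-x)) N K
        + (2 * K + 1) * Real.exp (-x) ^ (-(K : ℤ)) * c (Real.exp (-x)) N (K - 1))) := by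
  have h0 : 0 < Real.exp (-x) := Real.exp_pos _
  have h1 : Real.exp (-x) < 1 := by simpa using hx
  induction K with
  | zero => simp [c_neg_one]
  | succ K ih =>
    rw [Finset.sum_range_succ, Finset.sum_range_succ, ih, c_succ h0 h1, w_succ]
    generalize Real.exp (-x) = q at *
    have hq := h0.ne'
    rw [show (N : ℤ) + 2 + K = ((N + 1 : ℕ) : ℤ) + ((K + 1 : ℕ) : ℤ) by push_cast; ring,
      show (N : ℤ) + 1 - K = ((N + 1 : ℕ) : ℤ) + (-(K : ℤ)) by push_cast; ring,
      zpow_add₀ hq, zpow_add₀ hq, zpow_neg, zpow_neg, zpow_natCast, zpow_natCast, zpow_natCast,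
      show ((K + 1 : ℕ) : ℤ) - 1 = K by push_cast; ring,
      show 2 * N + 2 = (N + 1) + (N + 1) by ring, pow_add q (N + 1) (N + 1)]
    push_cast
    field_simp
    ring

/-- The finite form of Jacobi's identity. -/
lemma sum_eq_sq {x : ℝ} (hx : 0 < x) (N K : ℕ) (hK : N < K) :
    ∑ n ∈ Finset.range K, w x n * (2 * n + 1) * c (Real.exp (-x)) N n
      = Q (Real.exp (-x)) N ^ 2 := by
  have h0 : 0 < Real.exp (-x) := Real.exp_pos _
  have h1 : Real.exp (-x) < 1 := by simpa using hx
  induction N with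
  | zero =>
    rw [Finset.sum_eq_single_of_mem 0 (Finset.mem_range.2 hK)
      fun n _ hn => by rw [c_of_lt (by omega), mul_zero]]
    have h : 1 - Real.exp (-x) ≠ 0 := (sub_pos.2 h1).ne'
    have e : R (Real.exp (-x)) 1 = (Q (Real.exp (-x)) 1)⁻¹ := by simp [R]
    have e0 : R (Real.exp (-x)) 0 = (Q (Real.exp (-x)) 0)⁻¹ := by simp [R]
    simp [w, c, e, e0, Q, h]
  | succ N ih =>
    rw [sum_succ hx, ih (by omega), c_of_lt (by omega), c_of_lt (by omega), Q_succ]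
    ring

lemma multipliable_one_sub (h0 : 0 < q) (h1 : q < 1) :
    Multipliable fun n : ℕ => 1 - q ^ (n + 1) := by
  have hs : Summable fun n : ℕ => -q ^ (n + 1) :=
    ((summable_nat_add_iff 1).2 (summable_geometric_of_lt_one h0.le h1)).neg
  simpa [sub_eq_add_neg] using Real.multipliable_one_add_of_summable hs

lemma tprod_ne_zero (h0 : 0 < q) (h1 : q < 1) : ∏' n : ℕ, (1 - q ^ (n + 1)) ≠ 0 := by
  have hs : Summable fun n : ℕ => ‖-q ^ (n + 1)‖ := by
    simpa [abs_of_pos h0] using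
      (summable_nat_add_iff 1).2 (summable_geometric_of_lt_one h0.le h1)
  have := tprod_one_add_ne_zero_of_summable (f := fun n : ℕ => -q ^ (n + 1))
    (fun n => by simpa [sub_eq_add_neg] using (one_sub_pow_pos h0 h1 n).ne') hs
  simpa [sub_eq_add_neg] using this

lemma tendsto_Q (h0 : 0 < q) (h1 : q < 1) :
    Tendsto (Q q) atTop (𝓝 (∏' n : ℕ, (1 - q ^ (n + 1)))) :=
  (multipliable_one_sub h0 h1).hasProd.tendsto_prod_nat

lemma exists_R_bound (h0 : 0 < q) (h1 : q < 1) : ∃ C, 0 ≤ C ∧ ∀ k, |R q k| ≤ C := by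
  obtain ⟨C, hC⟩ := (Metric.isBounded_range_of_tendsto _
    ((tendsto_Q h0 h1).inv₀ (tprod_ne_zero h0 h1))).exists_norm_le
  have hC' : ∀ k : ℕ, |(Q q k)⁻¹| ≤ C := fun k => hC _ ⟨k, rfl⟩
  have hC0 : 0 ≤ C := (abs_nonneg _).trans (hC' 0)
  refine ⟨C, hC0, fun k => ?_⟩
  unfold R
  split_ifs
  · exact hC' _
  · simpa using hC0

lemma tendsto_R (h0 : 0 < q) (h1 : q < 1) :
    Tendsto (R q) atTop (𝓝 (∏' n : ℕ, (1 - q ^ (n + 1)))⁻¹) := by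
  have ht : Tendsto Int.toNat atTop atTop :=
    tendsto_atTop.2 fun b => (eventually_ge_atTop (b : ℤ)).mono fun a ha => by omega
  refine (((tendsto_Q h0 h1).inv₀ (tprod_ne_zero h0 h1)).comp ht).congr' ?_
  filter_upwards [eventually_ge_atTop 0] with k hk
  simp [R, hk]

lemma tendsto_c (h0 : 0 < q) (h1 : q < 1) (n : ℤ) :
    Tendsto (fun N => c q N n) atTop (𝓝 (∏' n : ℕ, (1 - q ^ (n + 1)))⁻¹) := by
  have hP := tprod_ne_zero h0 h1
  have t1 : Tendsto (fun N : ℕ => 2 * N + 1) atTop atTop :=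
    tendsto_atTop.2 fun b => (eventually_ge_atTop b).mono fun a ha => by omega
  have t2 : Tendsto (fun N : ℕ => (N : ℤ) - n) atTop atTop :=
    tendsto_atTop.2 fun b => (eventually_ge_atTop (b + n).toNat).mono fun a ha => by omega
  have t3 : Tendsto (fun N : ℕ => (N : ℤ) + 1 + n) atTop atTop :=
    tendsto_atTop.2 fun b => (eventually_ge_atTop (b - n).toNat).mono fun a ha => by omega
  have := (((tendsto_Q h0 h1).comp t1).mul ((tendsto_R h0 h1).comp t2)).mul
    ((tendsto_R h0 h1).comp t3)
  rwa [mul_inv_cancel₀ hP, one_mul] at this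

lemma abs_c_le (h0 : 0 < q) (h1 : q < 1) {C : ℝ} (hC0 : 0 ≤ C) (hC : ∀ k, |R q k| ≤ C)
    (N : ℕ) (n : ℤ) : |c q N n| ≤ C * C := by
  rw [c, abs_mul, abs_mul, abs_of_pos (Q_pos h0 h1 _)]
  have := mul_le_mul (Q_le_one h0 h1 (2 * N + 1)) (hC (N - n)) (abs_nonneg _) zero_le_one
  rw [one_mul] at this
  exact mul_le_mul this (hC _) (abs_nonneg _) hC0

lemma abs_w_le {x : ℝ} (hx : 0 < x) (n : ℕ) : |w x n| ≤ Real.exp (-x) ^ n := by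
  rw [w, abs_mul, abs_pow, abs_neg, abs_one, one_pow, one_mul, Real.abs_exp, ← Real.exp_nat_mul,
    Real.exp_le_exp]
  -- `n ≤ n(n+1)/2` holds for every natural number, `0` included.
  have : (n : ℝ) ≤ n * n := by exact_mod_cast Nat.le_mul_self n
  nlinarith

lemma tsum_w_mul {x : ℝ} (hx : 0 < x) :
    ∑' n : ℕ, w x n * (2 * n + 1) = (∏' n : ℕ, (1 - Real.exp (-x) ^ (n + 1))) ^ 3 := by
  have h0 : 0 < Real.exp (-x) := Real.exp_pos _
  have h1 : Real.exp (-x) < 1 := by simpa using hx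
  obtain ⟨C, hC0, hC⟩ := exists_R_bound h0 h1
  have hP := tprod_ne_zero h0 h1
  have hs : Summable fun n : ℕ => Real.exp (-x) ^ n * (2 * n + 1) * (C * C) := by
    have hn : ‖Real.exp (-x)‖ < 1 := by rwa [Real.norm_of_nonneg h0.le]
    have a := (summable_pow_mul_geometric_of_norm_lt_one 1 hn).mul_left 2
    have b := summable_geometric_of_lt_one h0.le h1
    exact ((a.add b).mul_right (C * C)).congr fun n => by ring
  have lim := tendsto_tsum_of_dominated_convergence (𝓕 := atTop)
    (f := fun (N n : ℕ) => w x n * (2 * n + 1) * c (Real.exp (-x)) N n) hs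
    (fun n => (tendsto_c h0 h1 n).const_mul (w x n * (2 * n + 1)))
    (Eventually.of_forall fun N n => by
      have h2 : (0 : ℝ) ≤ 2 * n + 1 := by positivity
      rw [Real.norm_eq_abs, abs_mul, abs_mul, abs_of_nonneg h2]
      have := abs_w_le hx n
      have := abs_c_le h0 h1 hC0 hC N n
      gcongr)
  have fin : ∀ N : ℕ, ∑' n : ℕ, w x n * (2 * n + 1) * c (Real.exp (-x)) N n
      = Q (Real.exp (-x)) N ^ 2 := fun N => by
    rw [← sum_eq_sq hx N (N + 1) N.lt_succ_self]
    refine tsum_eq_sum fun n hn => ?_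
    rw [Finset.mem_range] at hn
    rw [c_of_lt (by omega), mul_zero]
  simp only [fin, tsum_mul_right] at lim
  have := tendsto_nhds_unique lim ((tendsto_Q h0 h1).pow 2)
  rw [← div_eq_mul_inv, div_eq_iff hP] at this
  rw [this]
  ring

end JacobiCube

open JacobiCube in
theorem jacobi_identity (x : ℝ) (hx : 0 < x) :
    ∑' n : ℕ, (-1 : ℝ) ^ n * (2 * n + 1) * Real.exp (-(n * (n + 1) * x) / 2) =
      ∏' n : ℕ, (1 - Real.exp (-((n + 1) * x))) ^ 3 := by
  have h0 : 0 < Real.exp (-x) := Real.exp_pos _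
  have h1 : Real.exp (-x) < 1 := by simpa using hx
  have e : ∀ n : ℕ, Real.exp (-((n + 1) * x)) = Real.exp (-x) ^ (n + 1) := fun n => by
    rw [← Real.exp_nat_mul]
    push_cast
    ring_nf
  simp only [e]
  rw [(multipliable_one_sub h0 h1).tprod_pow, ← tsum_w_mul hx]
  exact tsum_congr fun n => by rw [w]; ring
end

section
/- For 0 ≤ q < 1, ∑_{λ ∈ A_∞} q^{|λ|} = ∏_{n=1}^∞ (1 + q^n) / ∏_{n=2}^∞ (1 - q^n), where A_∞ is the set of anti-lecture hall compositions, i.e. eventually-zero sequences (λ₁, λ₂, …) of nonnegative integers for which there exists n with λ₁/1 ≥ λ₂/2 ≥ ⋯ ≥ λ_n/n > 0 and λ_p = 0 for p > n (including the all-zero sequence), and |λ| = ∑_k λ_k. -/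
/-!
The proof evaluates, for all `k` and `v`, the generating function of the anti-lecture hall
compositions with at most `k` parts whose `k`-th part is at least `v` (the set `truncated k v`).
It has a product form: if `v = b * k + r` with `r ≤ k`, it equals

`q ^ (b * t k + t r + (k - r) * r) * P r * P (k - r) / D k`,

with `t n = n (n + 1) / 2`, `P n = ∏_{i ≤ n} (1 + q ^ i)` and `D k = ∏_{2 ≤ i ≤ k + 1} (1 - q ^ i)`.

Sorting the elements of `truncated (k + 1) v` by their last part `w ≥ v` leaves an element of
`truncated k ⌈k w / (k + 1)⌉` (`truncatedEquiv`), and `⌈k w / (k + 1)⌉ = w - ⌊w / (k + 1)⌋`. The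
product form satisfies the matching difference equation (`gf_sub_gf_succ`) and tends to `0` as `v`
grows, so the sum over `w` telescopes; induction on `k` then gives both convergence and value
(`hasSum_truncated`). At `v = 0` the product is `P k / D k`, and the theorem follows by letting
`k → ∞`, since `antiLectureHall` is the increasing union of the sets `truncated k 0`.
-/

/-- Anti-lecture hall compositions: finitely supported sequences `(λ₁, λ₂, …)`
(encoded by `f : ℕ →₀ ℕ` with `λ_k = f (k-1)`) such that for some `n`,
`λ₁/1 ≥ λ₂/2 ≥ ⋯ ≥ λ_n/n > 0` and `λ_p = 0` for `p > n`. -/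
def antiLectureHall : Set (ℕ →₀ ℕ) :=
  {f | ∃ n : ℕ, (∀ p : ℕ, n ≤ p → f p = 0) ∧
    (∀ k : ℕ, k + 1 < n → (f (k + 1) : ℚ) / (k + 2) ≤ (f k : ℚ) / (k + 1)) ∧
    (n = 0 ∨ 0 < f (n - 1))}

open Filter Topology

namespace AntiLectureHall

/-! ### The product form -/

/-- The triangular number `n (n + 1) / 2`. -/
def tri (n : ℕ) : ℕ := ∑ i ∈ Finset.range (n + 1), i

lemma tri_zero : tri 0 = 0 := by simp [tri]

lemma tri_succ (n : ℕ) : tri (n + 1) = tri n + (n + 1) := by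
  rw [tri, Finset.sum_range_succ, ← tri]

lemma le_tri (n : ℕ) : n ≤ tri n := by
  cases n with
  | zero => simp
  | succ n => rw [tri_succ]; omega

/-- The numerator `∏_{1 ≤ i ≤ n} (1 + q ^ i)`. -/
noncomputable def num (q : ℝ) (n : ℕ) : ℝ := ∏ i ∈ Finset.range n, (1 + q ^ (i + 1))

/-- The denominator `∏_{2 ≤ i ≤ n + 1} (1 - q ^ i)`. -/
noncomputable def den (q : ℝ) (n : ℕ) : ℝ := ∏ i ∈ Finset.range n, (1 - q ^ (i + 2))

lemma num_succ (q : ℝ) (n : ℕ) : num q (n + 1) = num q n * (1 + q ^ (n + 1)) :=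
  Finset.prod_range_succ _ _

lemma den_succ (q : ℝ) (n : ℕ) : den q (n + 1) = den q n * (1 - q ^ (n + 2)) :=
  Finset.prod_range_succ _ _

lemma num_pos {q : ℝ} (hq0 : 0 ≤ q) (n : ℕ) : 0 < num q n :=
  Finset.prod_pos fun _ _ => by positivity

lemma num_mono {q : ℝ} (hq0 : 0 ≤ q) : Monotone (num q) :=
  monotone_nat_of_le_succ fun n => by
    rw [num_succ]
    exact le_mul_of_one_le_right (num_pos hq0 n).le (le_add_of_nonneg_right (by positivity))

lemma one_sub_pow_pos {q : ℝ} (hq0 : 0 ≤ q) (hq1 : q < 1) (n : ℕ) : 0 < 1 - q ^ (n + 2) :=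
  sub_pos.2 (pow_lt_one₀ hq0 hq1 (by omega))

lemma den_pos {q : ℝ} (hq0 : 0 ≤ q) (hq1 : q < 1) (n : ℕ) : 0 < den q n :=
  Finset.prod_pos fun _ _ => one_sub_pow_pos hq0 hq1 _

/-- The product form of the generating function of `truncated k (b * k + r)`, for `r ≤ k`. -/
noncomputable def gfAux (q : ℝ) (k b r : ℕ) : ℝ :=
  q ^ (b * tri k + tri r + (k - r) * r) * (num q r * num q (k - r)) / den q k

/-- The product form of the generating function of `truncated k v`. -/
noncomputable def gf (q : ℝ) (k v : ℕ) : ℝ := gfAux q k (v / k) (v % k)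

/-- The two ways of writing `(b + 1) * k` as `b * k + r` with `r ≤ k` give the same value. -/
lemma gfAux_self (q : ℝ) (k b : ℕ) : gfAux q k b k = gfAux q k (b + 1) 0 := by
  simp only [gfAux, tri_zero, Nat.sub_self, Nat.sub_zero, zero_mul, mul_zero, add_zero]
  rw [mul_comm (num q k), Nat.succ_mul]

lemma gf_eq (q : ℝ) {k r : ℕ} (b : ℕ) (hr : r ≤ k) : gf q k (b * k + r) = gfAux q k b r := by
  rcases Nat.eq_zero_or_pos k with rfl | hk
  · obtain rfl : r = 0 := by omega
    simp [gf, gfAux, tri_zero]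
  rcases hr.lt_or_eq with h | rfl
  · rw [gf, mul_comm b k, Nat.mul_add_div hk, Nat.div_eq_of_lt h, Nat.mul_add_mod,
      Nat.mod_eq_of_lt h, add_zero]
  · have e : b * r + r = r * (b + 1) := by ring
    rw [gfAux_self, gf, e, Nat.mul_div_cancel_left _ hk, Nat.mul_mod_right]

lemma gfAux_sub_gfAux_succ {q : ℝ} (hq0 : 0 ≤ q) (hq1 : q < 1) {k r : ℕ} (b : ℕ) (hr : r ≤ k) :
    gfAux q (k + 1) b r - gfAux q (k + 1) b (r + 1) =
      q ^ (b * (k + 1) + r) * gfAux q k b r := by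
  obtain ⟨n, rfl⟩ := Nat.exists_eq_add_of_le hr
  have h1 := (den_pos hq0 hq1 (r + n)).ne'
  have h2 := (one_sub_pow_pos hq0 hq1 (r + n)).ne'
  have e1 : r + n + 1 - r = n + 1 := by omega
  have e2 : r + n + 1 - (r + 1) = n := by omega
  have e3 : r + n - r = n := by omega
  simp only [gfAux, e1, e2, e3, den_succ, tri_succ, num_succ]
  field_simp
  ring

/-- The difference equation: the elements of `truncated (k + 1) v` with last part exactly `v`
arise by appending `v` to an element of `truncated k (v - v / (k + 1))`. -/
lemma gf_sub_gf_succ {q : ℝ} (hq0 : 0 ≤ q) (hq1 : q < 1) (k v : ℕ) :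
    gf q (k + 1) v - gf q (k + 1) (v + 1) = q ^ v * gf q k (v - v / (k + 1)) := by
  have hr : v % (k + 1) ≤ k := Nat.lt_succ_iff.1 (Nat.mod_lt _ k.succ_pos)
  have hv : v = v / (k + 1) * (k + 1) + v % (k + 1) := (Nat.div_add_mod' _ _).symm
  generalize v / (k + 1) = b at *
  generalize v % (k + 1) = r at *
  have e : v - b = b * k + r := by
    have : b * (k + 1) = b * k + b := by ring
    omega
  rw [e, hv, gf_eq q b (by omega), add_assoc, gf_eq q b (by omega), gf_eq q b hr,
    gfAux_sub_gfAux_succ hq0 hq1 b hr]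

lemma gf_nonneg {q : ℝ} (hq0 : 0 ≤ q) (hq1 : q < 1) (k v : ℕ) : 0 ≤ gf q k v := by
  have := den_pos hq0 hq1 k
  have := num_pos hq0 (v % k)
  have := num_pos hq0 (k - v % k)
  unfold gf gfAux
  positivity

lemma tendsto_gf {q : ℝ} (hq0 : 0 ≤ q) (hq1 : q < 1) (k : ℕ) :
    Tendsto (gf q (k + 1)) atTop (𝓝 0) := by
  have hD := den_pos hq0 hq1 (k + 1)
  have hlim : Tendsto (fun v => q ^ v * (num q (k + 1) * num q (k + 1) / den q (k + 1)))
      atTop (𝓝 0) := by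
    simpa using (tendsto_pow_atTop_nhds_zero_of_lt_one hq0 hq1).mul_const
      (num q (k + 1) * num q (k + 1) / den q (k + 1))
  refine squeeze_zero (gf_nonneg hq0 hq1 _) (fun v => ?_) hlim
  have hr : v % (k + 1) ≤ k := Nat.lt_succ_iff.1 (Nat.mod_lt _ k.succ_pos)
  have hv : v = v / (k + 1) * (k + 1) + v % (k + 1) := (Nat.div_add_mod' _ _).symm
  have hexp : v ≤ v / (k + 1) * tri (k + 1) + tri (v % (k + 1)) +
      (k + 1 - v % (k + 1)) * (v % (k + 1)) := by
    have h1 := Nat.mul_le_mul_left (v / (k + 1)) (le_tri (k + 1))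
    have h2 := le_tri (v % (k + 1))
    omega
  rw [gf, gfAux, mul_div_assoc]
  have hn := num_pos hq0 (v % (k + 1))
  have hn' := num_pos hq0 (k + 1 - v % (k + 1))
  have hN := num_pos hq0 (k + 1)
  have i1 : num q (v % (k + 1)) ≤ num q (k + 1) := num_mono hq0 (by omega)
  have i2 : num q (k + 1 - v % (k + 1)) ≤ num q (k + 1) := num_mono hq0 (by omega)
  have i3 := pow_le_pow_of_le_one hq0 hq1.le hexp
  gcongr

/-! ### Compositions with at most `k` parts -/

/-- The anti-lecture hall compositions with at most `k` parts and, if `k ≠ 0`, with `k`-th part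
at least `v`; for `k = 0` the condition on `v` is vacuous. As in `antiLectureHall`, the part `λ_i`
is the value at `i - 1`. The conditions `λ_{i+1} / (i + 1) ≤ λ_i / i` are written without
division. -/
def truncated (k v : ℕ) : Set (ℕ →₀ ℕ) :=
  {f | (∀ p, k ≤ p → f p = 0) ∧ (∀ i, i + 1 < k → (i + 1) * f (i + 1) ≤ (i + 2) * f i) ∧
    ∀ i, i + 1 = k → v ≤ f i}

/-- The size `|λ|`, the sum of all parts. -/
def size (f : ℕ →₀ ℕ) : ℕ := f.sum fun _ v => v

lemma size_add_single (f : ℕ →₀ ℕ) (k w : ℕ) : size (f + Finsupp.single k w) = size f + w := by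
  rw [size, Finsupp.sum_add_index' (fun _ => rfl) (fun _ _ _ => rfl),
    Finsupp.sum_single_index rfl, size]

/-- The condition `k * w ≤ (k + 1) * x` on consecutive parts `x`, `w` says
`⌈k w / (k + 1)⌉ ≤ x`. -/
lemma sub_div_le_iff (k w x : ℕ) : w - w / (k + 1) ≤ x ↔ k * w ≤ (k + 1) * x := by
  have hr : w % (k + 1) ≤ k := Nat.lt_succ_iff.1 (Nat.mod_lt _ k.succ_pos)
  have hw : w = w / (k + 1) * (k + 1) + w % (k + 1) := (Nat.div_add_mod' _ _).symm
  generalize w / (k + 1) = b at *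
  generalize w % (k + 1) = r at *
  have e : w - b = b * k + r := by
    have : b * (k + 1) = b * k + b := by ring
    omega
  rw [e, hw]
  constructor
  · intro h
    nlinarith [Nat.mul_le_mul_left (k + 1) h]
  · intro h
    by_contra! hx
    nlinarith [Nat.mul_le_mul_left (k + 1) (Nat.succ_le_of_lt hx)]

lemma add_single_mem {k v w : ℕ} (hvw : v ≤ w) {f : ℕ →₀ ℕ}
    (hf : f ∈ truncated k (w - w / (k + 1))) :
    f + Finsupp.single k w ∈ truncated (k + 1) v := by
  obtain ⟨h0, h1, h2⟩ := hf
  refine ⟨fun p hp => ?_, fun i hi => ?_, fun i hi => ?_⟩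
  · rw [Finsupp.add_apply, h0 p (by omega), Finsupp.single_eq_of_ne (by omega), add_zero]
  · rcases Nat.lt_or_ge (i + 1) k with h | h
    · rw [Finsupp.add_apply, Finsupp.add_apply, Finsupp.single_eq_of_ne (by omega),
        Finsupp.single_eq_of_ne (by omega)]
      exact h1 i h
    · obtain rfl : k = i + 1 := by omega
      rw [Finsupp.add_apply, Finsupp.add_apply, Finsupp.single_eq_same,
        Finsupp.single_eq_of_ne (by omega), h0 _ le_rfl, zero_add, add_zero]
      exact (sub_div_le_iff _ _ _).1 (h2 i rfl)
  · obtain rfl : i = k := by omega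
    rw [Finsupp.add_apply, Finsupp.single_eq_same]
    omega

lemma erase_mem {k v : ℕ} {f : ℕ →₀ ℕ} (hf : f ∈ truncated (k + 1) v) :
    f.erase k ∈ truncated k (f k - f k / (k + 1)) := by
  obtain ⟨h0, h1, h2⟩ := hf
  refine ⟨fun p hp => ?_, fun i hi => ?_, fun i hi => ?_⟩
  · rcases hp.eq_or_lt with rfl | h
    · exact Finsupp.erase_same
    · rw [Finsupp.erase_ne (by omega), h0 p h]
  · rw [Finsupp.erase_ne (by omega), Finsupp.erase_ne (by omega)]
    exact h1 i (by omega)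
  · subst hi
    rw [Finsupp.erase_ne (by omega)]
    exact (sub_div_le_iff _ _ _).2 (h1 i (by omega))

/-- Decomposition of a composition according to its last part `v + j`. -/
noncomputable def truncatedEquiv (k v : ℕ) :
    (Σ j : ℕ, truncated k (v + j - (v + j) / (k + 1))) ≃ truncated (k + 1) v :=
  Equiv.ofBijective
    (fun x => ⟨x.2.1 + Finsupp.single k (v + x.1), add_single_mem (Nat.le_add_right _ _) x.2.2⟩) <| by
    constructor
    · rintro ⟨j, f, hf⟩ ⟨j', f', hf'⟩ h
      have h' : f + Finsupp.single k (v + j) = f' + Finsupp.single k (v + j') :=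
        congrArg Subtype.val h
      have hk := DFunLike.congr_fun h' k
      simp only [Finsupp.add_apply, Finsupp.single_eq_same, hf.1 k le_rfl, hf'.1 k le_rfl] at hk
      obtain rfl : j = j' := by omega
      obtain rfl := add_right_cancel h'
      rfl
    · rintro ⟨f, hf⟩
      have hv : v + (f k - v) = f k := Nat.add_sub_cancel' (hf.2.2 k rfl)
      refine ⟨⟨f k - v, f.erase k, ?_⟩, Subtype.ext ?_⟩
      · rw [hv]
        exact erase_mem hf
      · change f.erase k + Finsupp.single k (v + (f k - v)) = f
        rw [hv, Finsupp.erase_add_single]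

lemma hasSum_telescope {q : ℝ} (hq0 : 0 ≤ q) (hq1 : q < 1) (k v : ℕ) :
    HasSum (fun j => q ^ (v + j) * gf q k (v + j - (v + j) / (k + 1))) (gf q (k + 1) v) := by
  rw [hasSum_iff_tendsto_nat_of_nonneg
    fun j => mul_nonneg (pow_nonneg hq0 _) (gf_nonneg hq0 hq1 _ _)]
  have h : Tendsto (fun n => gf q (k + 1) v - gf q (k + 1) (n + v)) atTop
      (𝓝 (gf q (k + 1) v - 0)) :=
    tendsto_const_nhds.sub ((tendsto_add_atTop_iff_nat v).2 (tendsto_gf hq0 hq1 k))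
  rw [sub_zero] at h
  refine h.congr fun n => ?_
  simp only [← gf_sub_gf_succ hq0 hq1]
  rw [add_comm n]
  exact (Finset.sum_range_sub' (fun j => gf q (k + 1) (v + j)) n).symm

/-- For `k = 0` the set `truncated k v` does not depend on `v`, while `gf q 0 v` does; only `v = 0`
is correct there. -/
lemma hasSum_truncated {q : ℝ} (hq0 : 0 ≤ q) (hq1 : q < 1) (k : ℕ) :
    ∀ v, (k = 0 → v = 0) → HasSum (fun f : truncated k v => q ^ size f) (gf q k v) := by
  induction k with
  | zero =>
    intro v hv
    obtain rfl := hv rfl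
    have h0 : (0 : ℕ →₀ ℕ) ∈ truncated 0 0 := by simp [truncated]
    have : Unique (truncated 0 0) :=
      { default := ⟨0, h0⟩
        uniq := fun f => Subtype.ext (Finsupp.ext fun p => f.2.1 p (Nat.zero_le p)) }
    have e : gf q 0 0 = q ^ size ((default : truncated 0 0) : ℕ →₀ ℕ) := by
      have : ((default : truncated 0 0) : ℕ →₀ ℕ) = 0 :=
        Finsupp.ext fun p => (default : truncated 0 0).2.1 p (Nat.zero_le p)
      rw [this]
      simp [gf, gfAux, tri_zero, num, den, size]
    rw [e]
    exact hasSum_unique _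
  | succ k ih =>
    intro v _
    rw [← (truncatedEquiv k v).hasSum_iff]
    have hw (j : ℕ) (f : truncated k (v + j - (v + j) / (k + 1))) :
        ((fun f : truncated (k + 1) v => q ^ size f) ∘ truncatedEquiv k v) ⟨j, f⟩ =
          q ^ (v + j) * q ^ size f := by
      change q ^ size (f.1 + Finsupp.single k (v + j)) = _
      rw [size_add_single, pow_add, mul_comm]
    have hfib (j : ℕ) : HasSum (fun f : truncated k (v + j - (v + j) / (k + 1)) =>
        ((fun f : truncated (k + 1) v => q ^ size f) ∘ truncatedEquiv k v) ⟨j, f⟩)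
        (q ^ (v + j) * gf q k (v + j - (v + j) / (k + 1))) := by
      simp only [hw]
      refine (ih _ ?_).mul_left _
      rintro rfl
      simp
    refine (hasSum_telescope hq0 hq1 k v).sigma_of_hasSum hfib ?_
    refine (summable_sigma_of_nonneg fun x => pow_nonneg hq0 _).2
      ⟨fun j => (hfib j).summable, ?_⟩
    exact (hasSum_telescope hq0 hq1 k v).summable.congr fun j => (hfib j).tsum_eq.symm

/-! ### Passage to the limit -/

lemma le_div_iff_nat (k a b : ℕ) :
    (a : ℚ) / (k + 2) ≤ (b : ℚ) / (k + 1) ↔ (k + 1) * a ≤ (k + 2) * b := by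
  rw [div_le_div_iff₀ (by positivity) (by positivity), mul_comm (a : ℚ), mul_comm (b : ℚ)]
  exact_mod_cast Iff.rfl

lemma truncated_subset (k : ℕ) : truncated k 0 ⊆ antiLectureHall := by
  classical
  rintro f ⟨h0, h1, -⟩
  have hex : ∃ n, ∀ p, n ≤ p → f p = 0 := ⟨k, h0⟩
  -- The number of parts is the least `n` beyond which `f` vanishes.
  refine ⟨Nat.find hex, Nat.find_spec hex, fun i hi => ?_, ?_⟩
  · rw [le_div_iff_nat]
    exact h1 i (hi.trans_le (Nat.find_min' hex h0))
  · by_contra! h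
    obtain ⟨hn, hz⟩ := h
    refine Nat.find_min hex (m := Nat.find hex - 1) (by omega) fun p hp => ?_
    rcases hp.eq_or_lt with h | h
    · rw [← h]; omega
    · exact Nat.find_spec hex p (by omega)

lemma eventually_mem_truncated {f : ℕ →₀ ℕ} (hf : f ∈ antiLectureHall) :
    ∀ᶠ k in atTop, f ∈ truncated k 0 := by
  obtain ⟨n, h0, h1, -⟩ := hf
  filter_upwards [eventually_ge_atTop n] with k hk
  refine ⟨fun p hp => h0 p (hk.trans hp), fun i _ => ?_, fun _ _ => Nat.zero_le _⟩
  rcases Nat.lt_or_ge (i + 1) n with h | h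
  · exact (le_div_iff_nat _ _ _).1 (h1 i h)
  · simp [h0 _ h]

lemma gf_zero (q : ℝ) (k : ℕ) : gf q k 0 = num q k / den q k := by
  simp [gf, gfAux, tri_zero, num]

lemma tendsto_gf_zero {q : ℝ} (hq0 : 0 ≤ q) (hq1 : q < 1) :
    Tendsto (fun k => gf q k 0) atTop
      (𝓝 ((∏' n : ℕ, (1 + q ^ (n + 1))) / ∏' n : ℕ, (1 - q ^ (n + 2)))) := by
  have hs (m : ℕ) : Summable fun n : ℕ => q ^ (n + m) :=
    (summable_nat_add_iff m).2 (summable_geometric_of_lt_one hq0 hq1)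
  have hnum := (Real.multipliable_one_add_of_summable (hs 1)).tendsto_prod_tprod_nat
  have hden := (Real.multipliable_one_add_of_summable (hs 2).neg).tendsto_prod_tprod_nat
  have hne : ∏' n : ℕ, (1 + -q ^ (n + 2)) ≠ 0 :=
    tprod_one_add_ne_zero_of_summable
      (fun n => by rw [← sub_eq_add_neg]; exact (one_sub_pow_pos hq0 hq1 n).ne')
      (hs 2).neg.norm
  simp only [← sub_eq_add_neg] at hden hne
  simp only [gf_zero]
  exact hnum.div hden hne

/-- If `truncated k 0` has generating function `gf q k 0` tending to `L`, then `antiLectureHall`,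
the union of these sets, has generating function `L`: as the terms are nonnegative, `L` is the
least upper bound of the finite partial sums. -/
lemma hasSum_antiLectureHall {q L : ℝ} (hq0 : 0 ≤ q) (hq1 : q < 1)
    (hL : Tendsto (fun k => gf q k 0) atTop (𝓝 L)) :
    HasSum (fun f : antiLectureHall => q ^ size f) L := by
  have hk (k : ℕ) : HasSum ((truncated k 0).indicator fun f => q ^ size f) (gf q k 0) :=
    hasSum_subtype_iff_indicator.1 (hasSum_truncated hq0 hq1 k 0 fun _ => rfl)
  have hpos (f : ℕ →₀ ℕ) : 0 ≤ q ^ size f := pow_nonneg hq0 _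
  refine (hasSum_subtype_iff_indicator (f := fun f : ℕ →₀ ℕ => q ^ size f)).2
    (hasSum_of_isLUB_of_nonneg L (fun f => Set.indicator_nonneg (fun f _ => hpos f) f) ⟨?_, ?_⟩)
  · rintro _ ⟨s, rfl⟩
    have hev : ∀ᶠ k in atTop, ∀ f ∈ s, f ∈ antiLectureHall → f ∈ truncated k 0 :=
      (Finset.eventually_all s).2 fun f _ => by
        by_cases hf : f ∈ antiLectureHall
        · filter_upwards [eventually_mem_truncated hf] with k h _ using h
        · exact Eventually.of_forall fun k h => absurd h hf
    refine ge_of_tendsto hL ?_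
    filter_upwards [hev] with k hsk
    refine le_trans (Finset.sum_le_sum fun f hf => ?_)
      (sum_le_hasSum s (fun f _ => Set.indicator_nonneg (fun f _ => hpos f) f) (hk k))
    by_cases h : f ∈ antiLectureHall
    · rw [Set.indicator_of_mem h, Set.indicator_of_mem (hsk f hf h)]
    · rw [Set.indicator_of_notMem h]
      exact Set.indicator_nonneg (fun f _ => hpos f) f
  · intro c hc
    refine le_of_tendsto' hL fun k => hasSum_le_of_sum_le (hk k) fun s => ?_
    refine le_trans (Finset.sum_le_sum fun f _ => ?_) (hc ⟨s, rfl⟩)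
    exact Set.indicator_le_indicator_of_subset (truncated_subset k) hpos f

end AntiLectureHall

theorem anti_lecture_hall_generating_function (q : ℝ) (hq0 : 0 ≤ q) (hq1 : q < 1) :
    ∑' f : antiLectureHall, q ^ ((f : ℕ →₀ ℕ).sum fun _ v => v) =
      (∏' n : ℕ, (1 + q ^ (n + 1))) / ∏' n : ℕ, (1 - q ^ (n + 2)) :=
  (AntiLectureHall.hasSum_antiLectureHall hq0 hq1
    (AntiLectureHall.tendsto_gf_zero hq0 hq1)).tsum_eq
end
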